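/- Let P = c_P z₁^{α₁}z₂^{α₂}z₃^{α₃}, Q = c_Q z₁^{β₁}z₂^{β₂}z₃^{β₃}, R = c_R z₁^{γ₁}z₂^{γ₂}z₃^{γ₃} be monomials with nonzero coefficients c_P, c_Q, c_R ∈ ℂ, with deg P + deg Q = 2·deg R, deg R ≥ 2, and det[[α₁,β₁,γ₁],[α₂,β₂,γ₂],[α₃,β₃,γ₃]] ≠ 0 (holomorphic nondegeneracy); set d = deg P + deg Q. Then dim_ℝ g_{−1/d} > 0 if and only if dim_ℝ g_{1−1/d} > 0. -/

import Mathlib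

open MvPolynomial Complex

noncomputable section

/-- `Φ(z) = P(z)·conj(Q(z)) + Q(z)·conj(P(z)) + R(z)·conj(R(z))`, so that the model
hypersurface is `M = {(z,w) : Im w = Φ(z)}`. -/
def Phi (P Q R : MvPolynomial (Fin 3) ℂ) (z : Fin 3 → ℂ) : ℂ :=
  eval z P * (starRingEnd ℂ) (eval z Q) + eval z Q * (starRingEnd ℂ) (eval z P) +
    eval z R * (starRingEnd ℂ) (eval z R)

/-- `Φ_j(z) = (∂P/∂z_j)(z)·conj(Q(z)) + (∂Q/∂z_j)(z)·conj(P(z)) + (∂R/∂z_j)(z)·conj(R(z))`. -/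
def PhiD (P Q R : MvPolynomial (Fin 3) ℂ) (j : Fin 3) (z : Fin 3 → ℂ) : ℂ :=
  eval z (pderiv j P) * (starRingEnd ℂ) (eval z Q) +
    eval z (pderiv j Q) * (starRingEnd ℂ) (eval z P) +
    eval z (pderiv j R) * (starRingEnd ℂ) (eval z R)

/-- The monomial `c·z₁^{e₁} z₂^{e₂} z₃^{e₃}`. -/
def mon (c : ℂ) (e : Fin 3 → ℕ) : MvPolynomial (Fin 3) ℂ :=
  C c * X 0 ^ e 0 * X 1 ^ e 1 * X 2 ^ e 2

/-- Total degree of the exponent vector `e`. -/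
def degE (e : Fin 3 → ℕ) : ℕ := e 0 + e 1 + e 2

/-- The determinant of the 3×3 matrix whose columns are the exponent vectors
`a`, `b`, `g` of the three monomials. -/
def edet (a b g : Fin 3 → ℕ) : ℤ :=
  Matrix.det !![(a 0 : ℤ), (b 0 : ℤ), (g 0 : ℤ);
                (a 1 : ℤ), (b 1 : ℤ), (g 1 : ℤ);
                (a 2 : ℤ), (b 2 : ℤ), (g 2 : ℤ)]

/-- The polynomial vector field `Σ F_j ∂/∂z_j + G ∂/∂w` is an infinitesimal CR
automorphism of `M = {Im w = Φ(z)}`. -/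
def IsInfCR (P Q R : MvPolynomial (Fin 3) ℂ)
    (F : Fin 3 → MvPolynomial (Fin 4) ℂ) (G : MvPolynomial (Fin 4) ℂ) : Prop :=
  ∀ (z : Fin 3 → ℂ) (u : ℝ),
    (eval (Fin.snoc z ((u : ℂ) + Complex.I * Phi P Q R z)) G / (2 * Complex.I) -
      ∑ j, eval (Fin.snoc z ((u : ℂ) + Complex.I * Phi P Q R z)) (F j) * PhiD P Q R j z).re = 0

/-- The graded component `g_μ`: infinitesimal CR automorphisms of `M` all of whose
monomial terms have weight `μ` (each `z_j` having weight `1/d` and `w` weight `1`). -/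
def gw (P Q R : MvPolynomial (Fin 3) ℂ) (d : ℕ) (μ : ℚ) :
    Set ((Fin 3 → MvPolynomial (Fin 4) ℂ) × MvPolynomial (Fin 4) ℂ) :=
  {Xf | IsInfCR P Q R Xf.1 Xf.2 ∧
    (∀ j, ∀ m ∈ (Xf.1 j).support,
      ((m 0 : ℚ) + (m 1 : ℚ) + (m 2 : ℚ)) / (d : ℚ) + (m 3 : ℚ) - 1 / (d : ℚ) = μ) ∧
    ∀ m ∈ Xf.2.support,
      ((m 0 : ℚ) + (m 1 : ℚ) + (m 2 : ℚ)) / (d : ℚ) + (m 3 : ℚ) - 1 = μ}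

/-- Polarization: a polynomial in `z` and `ζ` vanishing on `ζ = conj z` is zero. -/
theorem eq_zero_of_eval_conj_eq_zero {σ : Type*} {H : MvPolynomial (σ ⊕ σ) ℂ}
    (h : ∀ z : σ → ℂ, eval (Sum.elim z fun i => starRingEnd ℂ (z i)) H = 0) : H = 0 := by
  let L : σ ⊕ σ → MvPolynomial (σ ⊕ σ) ℂ :=
    Sum.elim (fun i => X (.inl i) + C I * X (.inr i)) (fun i => X (.inl i) - C I * X (.inr i))
  have eval_L (x : σ ⊕ σ → ℂ) (p) : eval x (aeval L p) = eval (fun s => eval x (L s)) p := by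
    induction p using MvPolynomial.induction_on <;> simp_all
  have hL : aeval L H = 0 := by
    refine funext_set (fun _ => Set.range ((↑) : ℝ → ℂ))
      (fun _ => Set.infinite_range_of_injective ofReal_injective) fun x hx => ?_
    choose y hy using fun i => hx i (Set.mem_univ i)
    rw [eval_L, map_zero, ← h fun i => y (.inl i) + I * y (.inr i)]
    congr 2
    ext (i | i) <;> simp [L, ← hy, sub_eq_add_neg]
  refine MvPolynomial.funext fun x => ?_
  have key := eval_L (Sum.elim (fun i => (x (.inl i) + x (.inr i)) / 2)
    fun i => (x (.inl i) - x (.inr i)) / (2 * I)) H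
  rw [hL, map_zero] at key
  rw [map_zero, key]
  congr 2
  ext (i | i) <;> simp [L] <;> field_simp <;> ring

/-- The derivative of `P` along the vector field with components `f`. -/
def along (f : Fin 3 → MvPolynomial (Fin 3) ℂ) (P : MvPolynomial (Fin 3) ℂ) :
    MvPolynomial (Fin 3) ℂ :=
  ∑ j, f j * pderiv j P

/-- The tangency equation for a vector field whose coefficients do not involve `w`. -/
def IsTangent (P Q R : MvPolynomial (Fin 3) ℂ) (f : Fin 3 → MvPolynomial (Fin 3) ℂ)
    (g : MvPolynomial (Fin 3) ℂ) : Prop :=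
  ∀ z, (eval z g / (2 * I) - ∑ j, eval z (f j) * PhiD P Q R j z).re = 0

theorem sum_mul_PhiD (P Q R : MvPolynomial (Fin 3) ℂ) (z : Fin 3 → ℂ) (v : Fin 3 → ℂ) :
    ∑ j, v j * PhiD P Q R j z =
      (∑ j, v j * eval z (pderiv j P)) * starRingEnd ℂ (eval z Q) +
      (∑ j, v j * eval z (pderiv j Q)) * starRingEnd ℂ (eval z P) +
      (∑ j, v j * eval z (pderiv j R)) * starRingEnd ℂ (eval z R) := by
  simp only [PhiD, Fin.sum_univ_three]
  ring

theorem eval_map_conj (z : Fin 3 → ℂ) (p : MvPolynomial (Fin 3) ℂ) :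
    eval (fun i => starRingEnd ℂ (z i)) (map (starRingEnd ℂ) p) = starRingEnd ℂ (eval z p) := by
  rw [eval_map, eval₂_comp]
  rfl

namespace IsTangent

variable {P Q R : MvPolynomial (Fin 3) ℂ} {f : Fin 3 → MvPolynomial (Fin 3) ℂ}
  {g : MvPolynomial (Fin 3) ℂ}

theorem polarized (h : IsTangent P Q R f g) (z ζ : Fin 3 → ℂ) :
    eval z (C (1 / (2 * I)) * g) + eval ζ (map (starRingEnd ℂ) (C (1 / (2 * I)) * g)) =
      eval z (along f P) * eval ζ (map (starRingEnd ℂ) Q) +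
      eval z (along f Q) * eval ζ (map (starRingEnd ℂ) P) +
      eval z (along f R) * eval ζ (map (starRingEnd ℂ) R) +
      eval z Q * eval ζ (map (starRingEnd ℂ) (along f P)) +
      eval z P * eval ζ (map (starRingEnd ℂ) (along f Q)) +
      eval z R * eval ζ (map (starRingEnd ℂ) (along f R)) := by
  let l : MvPolynomial (Fin 3) ℂ →ₐ[ℂ] MvPolynomial (Fin 3 ⊕ Fin 3) ℂ := rename Sum.inl
  let r : MvPolynomial (Fin 3) ℂ → MvPolynomial (Fin 3 ⊕ Fin 3) ℂ :=
    fun p => rename Sum.inr (map (starRingEnd ℂ) p)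
  have hl (z ζ : Fin 3 → ℂ) (p) : eval (Sum.elim z ζ) (l p) = eval z p := by
    simp [l, eval_rename]
  have hr (z ζ : Fin 3 → ℂ) (p) :
      eval (Sum.elim z ζ) (r p) = eval ζ (map (starRingEnd ℂ) p) := by
    simp [r, eval_rename]
  have key : l (C (1 / (2 * I)) * g) + r (C (1 / (2 * I)) * g) -
      (l (along f P) * r Q + l (along f Q) * r P + l (along f R) * r R +
        l Q * r (along f P) + l P * r (along f Q) + l R * r (along f R)) = 0 := by
    refine eq_zero_of_eval_conj_eq_zero fun z => ?_
    simp only [map_sub, map_add, map_mul (eval _), hl, hr, eval_map_conj]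
    have add_conj_eq_zero {A : ℂ} (hA : A.re = 0) : A + starRingEnd ℂ A = 0 := by
      simp [Complex.add_conj, hA]
    have hz := add_conj_eq_zero (h z)
    rw [sum_mul_PhiD] at hz
    simp only [along, map_sum, map_mul, eval_C, map_sub, map_add, map_div₀, conj_conj, map_one,
      map_ofNat, conj_I] at hz ⊢
    linear_combination hz
  have := congrArg (eval (Sum.elim z ζ)) key
  simp only [map_sub, map_add, map_mul (eval _), hl, hr, map_zero] at this
  simpa only [map_mul (eval z)] using sub_eq_zero.1 this

/-- The coefficient of `conj z ^ n` in the tangency equation. -/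
theorem coeff_eq (h : IsTangent P Q R f g) {n : Fin 3 →₀ ℕ} (hn : n ≠ 0) :
    C (starRingEnd ℂ (coeff n (C (1 / (2 * I)) * g))) =
      along f P * C (starRingEnd ℂ (coeff n Q)) + along f Q * C (starRingEnd ℂ (coeff n P)) +
      along f R * C (starRingEnd ℂ (coeff n R)) + Q * C (starRingEnd ℂ (coeff n (along f P))) +
      P * C (starRingEnd ℂ (coeff n (along f Q))) +
      R * C (starRingEnd ℂ (coeff n (along f R))) := by
  refine MvPolynomial.funext fun z => ?_
  have key : C (eval z (C (1 / (2 * I)) * g)) + map (starRingEnd ℂ) (C (1 / (2 * I)) * g) =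
      C (eval z (along f P)) * map (starRingEnd ℂ) Q +
      C (eval z (along f Q)) * map (starRingEnd ℂ) P +
      C (eval z (along f R)) * map (starRingEnd ℂ) R +
      C (eval z Q) * map (starRingEnd ℂ) (along f P) +
      C (eval z P) * map (starRingEnd ℂ) (along f Q) +
      C (eval z R) * map (starRingEnd ℂ) (along f R) := by
    refine MvPolynomial.funext fun ζ => ?_
    simpa only [map_add, map_mul (eval _), eval_C] using h.polarized z ζ
  have := congrArg (coeff n) key
  simp only [coeff_add, coeff_C_mul, coeff_map, coeff_C, if_neg hn.symm, zero_add] at this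
  simpa only [map_add, map_mul (eval _), eval_C, coeff_C_mul] using this

end IsTangent

/-- The exponent vector `e` as a finitely supported function. -/
def expo (e : Fin 3 → ℕ) : Fin 3 →₀ ℕ := Finsupp.equivFunOnFinite.symm e

@[simp]
theorem expo_apply (e : Fin 3 → ℕ) (i : Fin 3) : expo e i = e i := rfl

theorem expo_inj {e e' : Fin 3 → ℕ} : expo e = expo e' ↔ e = e' :=
  Finsupp.equivFunOnFinite.symm.injective.eq_iff

theorem degree_expo (e : Fin 3 → ℕ) : (expo e).degree = degE e := by
  simp [Finsupp.degree_eq_sum, Fin.sum_univ_three, degE]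

theorem mon_eq_monomial (c : ℂ) (e : Fin 3 → ℕ) : mon c e = monomial (expo e) c := by
  rw [monomial_eq, Finsupp.prod_fintype _ _ (by simp), Fin.prod_univ_three]
  simp [mon, mul_assoc]

theorem coeff_mon (c : ℂ) (e e' : Fin 3 → ℕ) :
    coeff (expo e') (mon c e) = if e = e' then c else 0 := by
  rw [mon_eq_monomial, coeff_monomial]
  simp only [expo_inj]

theorem mon_ne_zero {c : ℂ} (hc : c ≠ 0) (e : Fin 3 → ℕ) : mon c e ≠ 0 := by
  rwa [mon_eq_monomial, Ne, monomial_eq_zero]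

theorem isHomogeneous_mon (c : ℂ) (e : Fin 3 → ℕ) : (mon c e).IsHomogeneous (degE e) := by
  rw [mon_eq_monomial]
  exact isHomogeneous_monomial c (degree_expo e)

theorem X_mul_pderiv_mon (c : ℂ) (e : Fin 3 → ℕ) (j : Fin 3) :
    X j * pderiv j (mon c e) = C (e j : ℂ) * mon c e := by
  rw [mon_eq_monomial, X_mul_pderiv_monomial, expo_apply, map_natCast, nsmul_eq_mul]

theorem isHomogeneous_along {f : Fin 3 → MvPolynomial (Fin 3) ℂ} {n : ℕ}
    (hf : ∀ j, (f j).IsHomogeneous n) (c : ℂ) (e : Fin 3 → ℕ) :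
    (along f (mon c e)).IsHomogeneous (n + (degE e - 1)) :=
  IsHomogeneous.sum _ _ _ fun j _ => (hf j).mul (isHomogeneous_mon c e).pderiv

theorem coeff_along_eq_zero {f : Fin 3 → MvPolynomial (Fin 3) ℂ} {n : ℕ}
    (hf : ∀ j, (f j).IsHomogeneous n) (c : ℂ) (e : Fin 3 → ℕ) {e' : Fin 3 → ℕ}
    (h : degE e' ≠ n + (degE e - 1)) : coeff (expo e') (along f (mon c e)) = 0 :=
  (isHomogeneous_along hf c e).coeff_eq_zero (by rwa [degree_expo])

theorem edet_eq (a b g : Fin 3 → ℕ) : edet a b g =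
    a 0 * b 1 * g 2 - a 0 * g 1 * b 2 - b 0 * a 1 * g 2 + b 0 * g 1 * a 2 +
      g 0 * a 1 * b 2 - g 0 * b 1 * a 2 := by
  simp [edet, Matrix.det_fin_three]

theorem edet_swap (a b g : Fin 3 → ℕ) : edet b a g = -edet a b g := by
  simp only [edet_eq]
  ring

theorem ne_of_edet_ne_zero {a b g : Fin 3 → ℕ} (hdet : edet a b g ≠ 0) :
    a ≠ b ∧ a ≠ g ∧ b ≠ g := by
  refine ⟨?_, ?_, ?_⟩ <;> rintro rfl <;> exact hdet (by rw [edet_eq]; ring)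

theorem degE_pos_of_edet_ne_zero {a b g : Fin 3 → ℕ} (hdet : edet a b g ≠ 0) :
    0 < degE a ∧ 0 < degE b ∧ 0 < degE g := by
  refine ⟨?_, ?_, ?_⟩ <;> by_contra h <;>
    simp only [degE, not_lt, Nat.le_zero, Nat.add_eq_zero_iff] at h <;>
    exact hdet (by rw [edet_eq]; simp [h])

theorem ne_zero_of_edet_ne_zero {a b g : Fin 3 → ℕ} (hdet : edet a b g ≠ 0)
    (j : Fin 3) (ha : a j = 0) (hg : g j = 0) : b j ≠ 0 := by
  intro hb
  refine hdet ?_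
  rw [edet_eq]
  fin_cases j <;> simp_all

/-- The vector field with components `f` is determined by its action on three
independent monomials. -/
theorem eq_zero_of_along_eq_zero {a b g : Fin 3 → ℕ} (hdet : edet a b g ≠ 0)
    {cP cQ cR : ℂ} (hcP : cP ≠ 0) (hcQ : cQ ≠ 0) (hcR : cR ≠ 0)
    {f : Fin 3 → MvPolynomial (Fin 3) ℂ} (hP : along f (mon cP a) = 0)
    (hQ : along f (mon cQ b) = 0) (hR : along f (mon cR g) = 0) : f = 0 := by
  have key {c : ℂ} (hc : c ≠ 0) {e : Fin 3 → ℕ} (h : along f (mon c e) = 0) :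
      (e 0 : MvPolynomial (Fin 3) ℂ) * (f 0 * X 1 * X 2) +
        (e 1 : MvPolynomial (Fin 3) ℂ) * (f 1 * X 0 * X 2) +
        (e 2 : MvPolynomial (Fin 3) ℂ) * (f 2 * X 0 * X 1) = 0 := by
    refine (mul_eq_zero.1 ?_).resolve_right (mon_ne_zero hc e)
    simp only [along, Fin.sum_univ_three] at h
    have h0 := X_mul_pderiv_mon c e 0
    have h1 := X_mul_pderiv_mon c e 1
    have h2 := X_mul_pderiv_mon c e 2
    simp only [map_natCast] at h0 h1 h2
    linear_combination X 0 * X 1 * X 2 * h - f 0 * X 1 * X 2 * h0 - f 1 * X 0 * X 2 * h1 -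
      f 2 * X 0 * X 1 * h2
  have hD : ((edet a b g : ℤ) : MvPolynomial (Fin 3) ℂ) ≠ 0 := by exact_mod_cast hdet
  have hD' := congrArg (Int.cast : ℤ → MvPolynomial (Fin 3) ℂ) (edet_eq a b g)
  push_cast at hD'
  have kP := key hcP hP
  have kQ := key hcQ hQ
  have kR := key hcR hR
  have h0 : (edet a b g : MvPolynomial (Fin 3) ℂ) * (f 0 * X 1 * X 2) = 0 := by
    rw [hD']
    linear_combination (b 1 * g 2 - b 2 * g 1 : MvPolynomial (Fin 3) ℂ) * kP -
      (a 1 * g 2 - a 2 * g 1 : MvPolynomial (Fin 3) ℂ) * kQ +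
      (a 1 * b 2 - a 2 * b 1 : MvPolynomial (Fin 3) ℂ) * kR
  have h1 : (edet a b g : MvPolynomial (Fin 3) ℂ) * (f 1 * X 0 * X 2) = 0 := by
    rw [hD']
    linear_combination -(b 0 * g 2 - b 2 * g 0 : MvPolynomial (Fin 3) ℂ) * kP +
      (a 0 * g 2 - a 2 * g 0 : MvPolynomial (Fin 3) ℂ) * kQ -
      (a 0 * b 2 - a 2 * b 0 : MvPolynomial (Fin 3) ℂ) * kR
  have h2 : (edet a b g : MvPolynomial (Fin 3) ℂ) * (f 2 * X 0 * X 1) = 0 := by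
    rw [hD']
    linear_combination (b 0 * g 1 - b 1 * g 0 : MvPolynomial (Fin 3) ℂ) * kP -
      (a 0 * g 1 - a 1 * g 0 : MvPolynomial (Fin 3) ℂ) * kQ +
      (a 0 * b 1 - a 1 * b 0 : MvPolynomial (Fin 3) ℂ) * kR
  funext j
  fin_cases j
  · simpa [hD, X_ne_zero] using h0
  · simpa [hD, X_ne_zero] using h1
  · simpa [hD, X_ne_zero] using h2

theorem along_zero (P : MvPolynomial (Fin 3) ℂ) : along 0 P = 0 := by
  simp [along]

theorem IsTangent.eq_zero {P Q R g : MvPolynomial (Fin 3) ℂ} (h : IsTangent P Q R 0 g) {n : ℕ}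
    (hn : n ≠ 0) (hg : g.IsHomogeneous n) : g = 0 := by
  ext m
  by_cases hm : m = 0
  · rw [hm, coeff_zero]
    exact hg.coeff_eq_zero (by simpa using hn.symm)
  · have := h.coeff_eq hm
    rw [coeff_C_mul] at this
    simpa [along_zero] using this

theorem IsTangent.eq_zero_of_isHomogeneous {cP cQ cR : ℂ} (hcP : cP ≠ 0) (hcQ : cQ ≠ 0)
    (hcR : cR ≠ 0) {a b g : Fin 3 → ℕ} (hdeg : degE a + degE b = 2 * degE g)
    (hdet : edet a b g ≠ 0) {f : Fin 3 → MvPolynomial (Fin 3) ℂ} {G : MvPolynomial (Fin 3) ℂ}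
    (h : IsTangent (mon cP a) (mon cQ b) (mon cR g) f G)
    (hf : ∀ j, (f j).IsHomogeneous (degE a + degE b))
    (hG : G.IsHomogeneous (2 * (degE a + degE b) - 1)) : f = 0 ∧ G = 0 := by
  obtain ⟨hab, hag, hbg⟩ := ne_of_edet_ne_zero hdet
  obtain ⟨pa, pb, pg⟩ := degE_pos_of_edet_ne_zero hdet
  have expo_ne {e : Fin 3 → ℕ} (he : 0 < degE e) : expo e ≠ 0 := by
    intro h0
    simp [← degree_expo, h0] at he
  have coeff_G {e : Fin 3 → ℕ} (he : degE e < degE a + degE b) :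
      coeff (expo e) (C (1 / (2 * I)) * G) = 0 :=
    (hG.C_mul _).coeff_eq_zero (by rw [degree_expo]; omega)
  have ea := h.coeff_eq (expo_ne pa)
  have eb := h.coeff_eq (expo_ne pb)
  have eg := h.coeff_eq (expo_ne pg)
  rw [coeff_G (by omega), coeff_along_eq_zero hf _ _ (by omega),
    coeff_along_eq_zero hf _ _ (by omega), coeff_along_eq_zero hf _ _ (by omega)] at ea eb eg
  have hf0 : f = 0 := by
    refine eq_zero_of_along_eq_zero hdet hcP hcQ hcR ?_ ?_ ?_
    · simpa [coeff_mon, hab, hbg.symm, hcQ] using eb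
    · simpa [coeff_mon, hab.symm, hag.symm, hcP] using ea
    · simpa [coeff_mon, hag, hbg, hcR] using eg
  subst hf0
  exact ⟨rfl, h.eq_zero (by omega) hG⟩

theorem coeff_along_C {c : Fin 3 → ℂ} {k : ℂ} {e : Fin 3 → ℕ} {j : Fin 3} :
    coeff (expo e - Finsupp.single j 1) (along (fun i => C (c i)) (mon k e)) = k * (c j * e j) := by
  rw [along, coeff_sum, Finset.sum_eq_single j]
  · rw [mon_eq_monomial, pderiv_monomial, coeff_C_mul, coeff_monomial, if_pos rfl, expo_apply]
    ring
  · intro i _ hij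
    rw [mon_eq_monomial, pderiv_monomial, coeff_C_mul, coeff_monomial]
    split_ifs with h
    · have := DFunLike.congr_fun h i
      simp [hij.symm] at this
      have : e i = 0 := by omega
      simp [this]
    · simp
  · simp

theorem along_C_eq_zero {c : Fin 3 → ℂ} {k : ℂ} {e : Fin 3 → ℕ} (h : ∀ j, c j * e j = 0) :
    along (fun i => C (c i)) (mon k e) = 0 := by
  refine Finset.sum_eq_zero fun j _ => ?_
  rw [mon_eq_monomial, pderiv_monomial, C_mul_monomial, expo_apply, mul_left_comm, h]
  simp

theorem sub_single_eq_of_along_C_eq {c : Fin 3 → ℂ} {k : ℂ} (hk : k ≠ 0) {e : Fin 3 → ℕ}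
    {l : ℂ} {s : Fin 3 →₀ ℕ} (h : along (fun i => C (c i)) (mon k e) = monomial s l) {j : Fin 3}
    (hj : c j * e j ≠ 0) : s = expo e - Finsupp.single j 1 := by
  by_contra hne
  have := coeff_along_C (c := c) (k := k) (e := e) (j := j)
  rw [h, coeff_monomial, if_neg hne] at this
  exact mul_ne_zero hk hj this.symm

theorem IsTangent.exists_eq_single {cP cQ cR : ℂ} (hcP : cP ≠ 0) (hcQ : cQ ≠ 0)
    (hcR : cR ≠ 0) {a b g : Fin 3 → ℕ} (hdeg : degE a + degE b = 2 * degE g)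
    (hdegR : 2 ≤ degE g) (hdet : edet a b g ≠ 0) (hba : degE b ≤ degE a)
    {c : Fin 3 → ℂ} (hc : c ≠ 0) {G : MvPolynomial (Fin 3) ℂ}
    (h : IsTangent (mon cP a) (mon cQ b) (mon cR g) (fun j => C (c j)) G)
    (hG : G.IsHomogeneous (degE a + degE b - 1)) :
    ∃ j, b = Pi.single j 1 ∧ a j = 0 ∧ g j = 0 := by
  obtain ⟨hab, hag, hbg⟩ := ne_of_edet_ne_zero hdet
  obtain ⟨pa, pb, pg⟩ := degE_pos_of_edet_ne_zero hdet
  have expo_ne {e : Fin 3 → ℕ} (he : 0 < degE e) : expo e ≠ 0 := by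
    intro h0
    simp [← degree_expo, h0] at he
  have hf (j : Fin 3) : (C (c j) : MvPolynomial (Fin 3) ℂ).IsHomogeneous 0 := isHomogeneous_C _ _
  have coeff_G {e : Fin 3 → ℕ} (he : degE e ≠ degE a + degE b - 1) :
      coeff (expo e) (C (1 / (2 * I)) * G) = 0 :=
    (hG.C_mul _).coeff_eq_zero (by rwa [degree_expo])
  have ea := h.coeff_eq (expo_ne pa)
  have eb := h.coeff_eq (expo_ne pb)
  have eg := h.coeff_eq (expo_ne pg)
  rw [coeff_along_eq_zero hf _ _ (by omega), coeff_along_eq_zero hf _ _ (by omega),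
    coeff_along_eq_zero hf _ _ (by omega)] at ea
  rw [coeff_G (by omega), coeff_along_eq_zero hf cP a (by omega),
    coeff_along_eq_zero hf cQ b (by omega)] at eb
  rw [coeff_G (by omega), coeff_along_eq_zero hf cQ b (by omega),
    coeff_along_eq_zero hf cR g (by omega)] at eg
  simp only [coeff_mon, hab, hab.symm, hag, hag.symm, hbg, hbg.symm, if_true, if_false, map_zero,
    mul_zero, add_zero, zero_add] at ea eb eg
  set f : Fin 3 → MvPolynomial (Fin 3) ℂ := fun j => C (c j) with hf_def
  have of_mul_C {p : MvPolynomial (Fin 3) ℂ} {k l : ℂ} {s : Fin 3 →₀ ℕ} (hk : k ≠ 0)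
      (hp : p * C (starRingEnd ℂ k) = monomial s l) : p = monomial s (l / starRingEnd ℂ k) := by
    have hk' : starRingEnd ℂ k ≠ 0 := by simpa using hk
    calc p = p * C (starRingEnd ℂ k) * C (starRingEnd ℂ k)⁻¹ := by
          rw [mul_assoc, ← C_mul, mul_inv_cancel₀ hk', C_1, mul_one]
      _ = _ := by rw [hp, mul_comm, C_mul_monomial, mul_comm, div_eq_mul_inv]
  have hQ := of_mul_C (p := along f (mon cQ b)) hcP (s := 0) ea.symm
  have hP := of_mul_C (p := along f (mon cP a)) hcQ (s := expo g)
    (l := -(cR * starRingEnd ℂ (coeff (expo b) (along f (mon cR g))))) (by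
      rw [map_neg, mul_comm cR, ← C_mul_monomial, ← mon_eq_monomial]
      linear_combination -eb)
  have hR := of_mul_C (p := along f (mon cR g)) hcR (s := expo b)
    (l := -(cQ * starRingEnd ℂ (coeff (expo g) (along f (mon cP a))))) (by
      rw [map_neg, mul_comm cQ, ← C_mul_monomial, ← mon_eq_monomial]
      linear_combination -eg)
  have along_P_eq_zero (h0 : along f (mon cR g) = 0) : along f (mon cP a) = 0 := by
    rw [hP, h0]; simp
  have along_R_eq_zero (h0 : along f (mon cP a) = 0) : along f (mon cR g) = 0 := by
    rw [hR, h0]; simp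
  have exponents_vanish {k : ℂ} (hk : k ≠ 0) {e : Fin 3 → ℕ} (h0 : along f (mon k e) = 0)
      (j : Fin 3) : c j * e j = 0 := by
    have := coeff_along_C (c := c) (k := k) (e := e) (j := j)
    rw [← hf_def, h0, coeff_zero] at this
    exact (mul_eq_zero.1 this.symm).resolve_left hk
  have ha : ∀ j, c j * a j = 0 := by
    by_contra! ⟨j, hj⟩
    have hgj := sub_single_eq_of_along_C_eq hcP hP hj
    obtain ⟨k, hk⟩ : ∃ k, c k * g k ≠ 0 := by
      by_contra! hg0
      exact hj (exponents_vanish hcP (along_P_eq_zero (along_C_eq_zero hg0)) j)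
    have hbk := sub_single_eq_of_along_C_eq hcR hR hk
    have gi (i : Fin 3) : g i = a i - Finsupp.single j 1 i := DFunLike.congr_fun hgj i
    have bi (i : Fin 3) : b i = g i - Finsupp.single k 1 i := DFunLike.congr_fun hbk i
    have hck : c k * a k ≠ 0 := by
      have := gi k
      refine mul_ne_zero (left_ne_zero_of_mul hk) ?_
      have := right_ne_zero_of_mul hk
      norm_cast at this ⊢
      omega
    have hgk := sub_single_eq_of_along_C_eq hcP hP hck
    have gi' (i : Fin 3) : g i = a i - Finsupp.single k 1 i := DFunLike.congr_fun hgk i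
    have hkj : k = j := by
      by_contra hkj
      have h1 := gi k
      have h2 := gi' k
      have h3 := right_ne_zero_of_mul hck
      norm_cast at h3
      simp [Ne.symm hkj] at h1 h2
      omega
    subst hkj
    have hg_pos := right_ne_zero_of_mul hk
    norm_cast at hg_pos
    have hsum (i : Fin 3) : (b i : ℤ) = 2 * g i - a i := by
      have h1 := gi i
      have h2 := bi i
      by_cases hki : k = i
      · subst hki
        simp at h1 h2
        omega
      · simp [hki] at h1 h2
        omega
    refine hdet ?_
    rw [edet_eq, hsum, hsum, hsum]
    ring
  have hg := exponents_vanish hcR (along_R_eq_zero (along_C_eq_zero ha))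
  obtain ⟨j, hj⟩ := Function.ne_iff.1 hc
  have haj : a j = 0 := by simpa [show c j ≠ 0 from hj] using ha j
  have hgj : g j = 0 := by simpa [show c j ≠ 0 from hj] using hg j
  have hbj := ne_zero_of_edet_ne_zero hdet j haj hgj
  have hb := sub_single_eq_of_along_C_eq hcQ hQ
    (mul_ne_zero hj (Nat.cast_ne_zero.2 hbj))
  refine ⟨j, ?_, haj, hgj⟩
  funext i
  have hbi : 0 = b i - Finsupp.single j 1 i := DFunLike.congr_fun hb i
  by_cases hij : j = i
  · subst hij
    simp at hbi ⊢
    omega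
  · simp [hij] at hbi
    simp [hbi, Ne.symm hij]

/-- The inclusion of `ℂ[z₁,z₂,z₃]` into `ℂ[z₁,z₂,z₃,w]`. -/
def liftZ : MvPolynomial (Fin 3) ℂ →ₐ[ℂ] MvPolynomial (Fin 4) ℂ := rename Fin.castSucc

theorem liftZ_injective : Function.Injective liftZ :=
  rename_injective _ (Fin.castSucc_injective 3)

theorem eval_snoc_liftZ (z : Fin 3 → ℂ) (w : ℂ) (p : MvPolynomial (Fin 3) ℂ) :
    eval (Fin.snoc z w : Fin 4 → ℂ) (liftZ p) = eval z p := by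
  rw [liftZ, eval_rename]
  congr 2
  ext i
  simp

theorem eval_snoc_X_last (z : Fin 3 → ℂ) (w : ℂ) :
    eval (Fin.snoc z w : Fin 4 → ℂ) (X (Fin.last 3)) = w := by
  rw [eval_X, Fin.snoc_last]

/-- The weights of `z₁, z₂, z₃, w`, scaled by `d`. -/
def wt (d : ℕ) : Fin 4 → ℕ := ![1, 1, 1, d]

theorem weight_wt (d : ℕ) (m : Fin 4 →₀ ℕ) :
    Finsupp.weight (wt d) m = m 0 + m 1 + m 2 + m 3 * d := by
  simp [Finsupp.weight_apply, Finsupp.sum_fintype, Fin.sum_univ_four, wt]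

theorem mem_gw_iff {P Q R : MvPolynomial (Fin 3) ℂ} {d : ℕ} (hd : 0 < d) (k : ℕ)
    {Xf : (Fin 3 → MvPolynomial (Fin 4) ℂ) × MvPolynomial (Fin 4) ℂ} :
    Xf ∈ gw P Q R d (k - 1 / d) ↔ IsInfCR P Q R Xf.1 Xf.2 ∧
      (∀ j, IsWeightedHomogeneous (wt d) (Xf.1 j) (k * d)) ∧
      IsWeightedHomogeneous (wt d) Xf.2 ((k + 1) * d - 1) := by
  have hd' : (d : ℚ) ≠ 0 := by exact_mod_cast hd.ne'
  have hF (m : Fin 4 →₀ ℕ) : ((m 0 : ℚ) + m 1 + m 2) / d + m 3 - 1 / d = k - 1 / d ↔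
      Finsupp.weight (wt d) m = k * d := by
    rw [weight_wt, ← Nat.cast_inj (R := ℚ)]
    push_cast
    field_simp
    constructor <;> intro h <;> linarith
  have hG (m : Fin 4 →₀ ℕ) : ((m 0 : ℚ) + m 1 + m 2) / d + m 3 - 1 = k - 1 / d ↔
      Finsupp.weight (wt d) m = (k + 1) * d - 1 := by
    rw [weight_wt, ← Nat.cast_inj (R := ℚ), Nat.cast_sub (Nat.mul_pos k.succ_pos hd)]
    push_cast
    field_simp
    constructor <;> intro h <;> linarith
  simp only [gw, Set.mem_ofPred_eq, hF, hG, mem_support_iff, IsWeightedHomogeneous]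

theorem isWeightedHomogeneous_liftZ {p : MvPolynomial (Fin 3) ℂ} {n : ℕ} (hp : p.IsHomogeneous n)
    (d : ℕ) : IsWeightedHomogeneous (wt d) (liftZ p) n := by
  intro m hm
  obtain ⟨u, rfl, hu⟩ := coeff_rename_ne_zero _ _ _ hm
  have hu' : u.degree = n := by
    by_contra h
    exact hu (hp.coeff_eq_zero h)
  have happ (i : Fin 3) : Finsupp.mapDomain Fin.castSucc u i.castSucc = u i :=
    Finsupp.mapDomain_apply (Fin.castSucc_injective 3) _ _
  have hlast : Finsupp.mapDomain Fin.castSucc u (Fin.last 3) = 0 :=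
    Finsupp.mapDomain_of_notMem_range _ _ (by simp)
  rw [weight_wt, ← hu', Finsupp.degree_eq_sum, Fin.sum_univ_three, ← happ 0, ← happ 1, ← happ 2]
  simpa using Or.inl hlast

theorem isWeightedHomogeneous_X_last_mul_liftZ {p : MvPolynomial (Fin 3) ℂ} {n : ℕ}
    (hp : p.IsHomogeneous n) (d : ℕ) :
    IsWeightedHomogeneous (wt d) (X (Fin.last 3) * liftZ p) (d + n) :=
  (isWeightedHomogeneous_X ℂ (wt d) (Fin.last 3)).mul (isWeightedHomogeneous_liftZ hp d)

theorem monomial_eq_X_last_pow_mul_liftZ (m : Fin 4 →₀ ℕ) (c : ℂ) :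
    monomial m c = X (Fin.last 3) ^ m 3 * liftZ (monomial (expo fun i => m i.castSucc) c) := by
  rw [liftZ, rename_monomial, X_pow_eq_monomial, monomial_mul, one_mul]
  refine congrArg (fun s => monomial s c) (Finsupp.ext fun i => ?_)
  refine Fin.lastCases ?_ (fun i => ?_) i
  · rw [Finsupp.add_apply, Finsupp.mapDomain_of_notMem_range _ _ (by simp)]
    simp
  · rw [Finsupp.add_apply, Finsupp.mapDomain_apply (Fin.castSucc_injective 3),
      Finsupp.single_eq_of_ne (Fin.castSucc_ne_last i), expo_apply, zero_add]

/-- A weighted homogeneous polynomial of weighted degree less than `2 * d` is affine in `w`. -/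
theorem exists_eq_liftZ_add_X_mul_liftZ {d D : ℕ} (hD : D < 2 * d) {H : MvPolynomial (Fin 4) ℂ}
    (hH : IsWeightedHomogeneous (wt d) H D) :
    ∃ H₀ H₁ : MvPolynomial (Fin 3) ℂ, H₀.IsHomogeneous D ∧ H₁.IsHomogeneous (D - d) ∧
      (D < d → H₁ = 0) ∧ H = liftZ H₀ + X (Fin.last 3) * liftZ H₁ := by
  rw [H.as_sum]
  refine Finset.sum_induction _ (fun H => ∃ H₀ H₁ : MvPolynomial (Fin 3) ℂ, H₀.IsHomogeneous D ∧
    H₁.IsHomogeneous (D - d) ∧ (D < d → H₁ = 0) ∧ H = liftZ H₀ + X (Fin.last 3) * liftZ H₁)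
    ?_ ⟨0, 0, isHomogeneous_zero _ _ _, isHomogeneous_zero _ _ _, fun _ => rfl, by simp⟩ ?_
  · rintro _ _ ⟨p, q, hp, hq, hq0, rfl⟩ ⟨p', q', hp', hq', hq0', rfl⟩
    refine ⟨p + p', q + q', hp.add hp', hq.add hq', fun h => by rw [hq0 h, hq0' h, add_zero], ?_⟩
    simp only [map_add]
    ring
  · intro m hm
    have hw := hH (mem_support_iff.1 hm)
    rw [weight_wt] at hw
    have hdegree : (expo fun i => m i.castSucc).degree = m 0 + m 1 + m 2 := degree_expo _
    have hm3 : m 3 < 2 := by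
      by_contra! h
      have := Nat.mul_le_mul_right d h
      omega
    rw [monomial_eq_X_last_pow_mul_liftZ]
    interval_cases h : m 3
    · exact ⟨monomial (expo fun i => m i.castSucc) (coeff m H), 0,
        isHomogeneous_monomial _ (by omega), isHomogeneous_zero _ _ _, fun _ => rfl, by simp⟩
    · exact ⟨0, monomial (expo fun i => m i.castSucc) (coeff m H), isHomogeneous_zero _ _ _,
        isHomogeneous_monomial _ (by omega), fun _ => by omega, by simp⟩

theorem isInfCR_liftZ {P Q R : MvPolynomial (Fin 3) ℂ} {f : Fin 3 → MvPolynomial (Fin 3) ℂ}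
    {g : MvPolynomial (Fin 3) ℂ} :
    IsInfCR P Q R (fun j => liftZ (f j)) (liftZ g) ↔ IsTangent P Q R f g := by
  simp only [IsInfCR, IsTangent, eval_snoc_liftZ, forall_const]

/-- For coefficients affine in `w`, the part linear in `Re w` of the tangency equation is the
tangency equation of the coefficients of `w`. -/
theorem IsInfCR.isTangent_of_affine {P Q R : MvPolynomial (Fin 3) ℂ}
    {f₀ f₁ : Fin 3 → MvPolynomial (Fin 3) ℂ} {g₀ g₁ : MvPolynomial (Fin 3) ℂ}
    (h : IsInfCR P Q R (fun j => liftZ (f₀ j) + X (Fin.last 3) * liftZ (f₁ j))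
      (liftZ g₀ + X (Fin.last 3) * liftZ g₁)) : IsTangent P Q R f₁ g₁ := by
  intro z
  have h0 := h z 0
  have h1 := h z 1
  simp only [map_add, map_mul, eval_snoc_liftZ, eval_snoc_X_last] at h0 h1
  have hsub := congrArg₂ (· - ·) h1 h0
  simp only [← sub_re, sub_zero] at hsub
  rw [← hsub]
  congr 1
  simp only [Fin.sum_univ_three, ofReal_zero, ofReal_one]
  ring

theorem gw_comm (P Q R : MvPolynomial (Fin 3) ℂ) (d : ℕ) (μ : ℚ) :
    gw P Q R d μ = gw Q P R d μ := by
  have hPhi : Phi P Q R = Phi Q P R := by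
    funext z
    simp only [Phi]
    ring
  have hPhiD : PhiD P Q R = PhiD Q P R := by
    funext j z
    simp only [PhiD]
    ring
  simp only [gw, IsInfCR, hPhi, hPhiD]

theorem rank_span_pos_iff {V : Type*} [AddCommGroup V] [Module ℝ V] (s : Set V) :
    0 < Module.rank ℝ (Submodule.span ℝ s) ↔ ∃ x ∈ s, x ≠ 0 := by
  rw [rank_pos_iff_nontrivial, Submodule.nontrivial_iff_ne_bot, Ne, Submodule.span_eq_bot]
  push Not
  rfl

theorem exists_mem_gw_of_isTangent {P Q R : MvPolynomial (Fin 3) ℂ} {d : ℕ} (hd : 0 < d)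
    {f : Fin 3 → MvPolynomial (Fin 3) ℂ} {g : MvPolynomial (Fin 3) ℂ} (h : IsTangent P Q R f g)
    (hf : ∀ j, (f j).IsHomogeneous 0) (hg : g.IsHomogeneous (d - 1)) (hne : f ≠ 0 ∨ g ≠ 0) :
    ∃ Xf ∈ gw P Q R d ((0 : ℕ) - 1 / d), Xf ≠ 0 := by
  refine ⟨(fun j => liftZ (f j), liftZ g), (mem_gw_iff hd 0).2 ⟨isInfCR_liftZ.2 h, fun j => ?_, ?_⟩,
    fun h0 => ?_⟩
  · simpa using isWeightedHomogeneous_liftZ (hf j) d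
  · simpa using isWeightedHomogeneous_liftZ hg d
  · obtain ⟨hf0, hg0⟩ := Prod.mk.inj h0
    refine hne.elim (fun hne => hne ?_) (fun hne => hne ?_)
    · exact funext fun j => liftZ_injective (by simpa using congrFun hf0 j)
    · exact liftZ_injective (by simpa using hg0)

/-- An Euler field: a diagonal linear vector field fixing three independent monomials. -/
theorem exists_euler {a b g : Fin 3 → ℕ} (hdet : edet a b g ≠ 0) :
    ∃ e : Fin 3 → ℂ, ∑ k, e k * a k = 1 ∧ ∑ k, e k * b k = 1 ∧ ∑ k, e k * g k = 1 := by
  let M : Matrix (Fin 3) (Fin 3) ℂ := Matrix.of fun i k => (![a, b, g] i k : ℂ)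
  have hM : IsUnit M := by
    rw [Matrix.isUnit_iff_isUnit_det, isUnit_iff_ne_zero]
    have : M.det = (edet a b g : ℂ) := by
      rw [edet_eq, Matrix.det_fin_three]
      simp [M]
      ring
    rw [this]
    exact_mod_cast hdet
  obtain ⟨e, he⟩ := Matrix.mulVec_surjective_iff_isUnit.2 hM 1
  have key (i : Fin 3) : ∑ k, e k * (![a, b, g] i k : ℂ) = 1 := by
    simpa [Matrix.mulVec, dotProduct, M, mul_comm] using congrFun he i
  exact ⟨e, key 0, key 1, key 2⟩

theorem exists_mem_gw_of_eq_single {cP cQ cR : ℂ} {a b g : Fin 3 → ℕ}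
    (hdet : edet a b g ≠ 0) {j : Fin 3} (hb : b = Pi.single j 1) (ha : a j = 0) (hg : g j = 0) :
    ∃ Xf ∈ gw (mon cP a) (mon cQ b) (mon cR g) (degE a + degE b)
      ((1 : ℕ) - 1 / (degE a + degE b : ℕ)), Xf ≠ 0 := by
  obtain ⟨e, hea, heb, heg⟩ := exists_euler hdet
  have hbdeg : degE b = 1 := by
    subst hb
    fin_cases j <;> simp [degE]
  set κ := 2 * I * starRingEnd ℂ cQ
  let f₀ : Fin 3 → MvPolynomial (Fin 3) ℂ := fun k => C (κ * e k) * (mon cP a * X k)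
  let f₁ : Fin 3 → MvPolynomial (Fin 3) ℂ := Pi.single j 1
  let F : Fin 3 → MvPolynomial (Fin 4) ℂ := fun k => liftZ (f₀ k) + X (Fin.last 3) * liftZ (f₁ k)
  let G : MvPolynomial (Fin 4) ℂ := X (Fin.last 3) * liftZ (C κ * mon cP a)
  have hf₀ (k : Fin 3) : (f₀ k).IsHomogeneous (degE a + degE b) := by
    rw [hbdeg]
    exact ((isHomogeneous_mon cP a).mul (isHomogeneous_X ℂ k)).C_mul _
  have hf₁ (k : Fin 3) : (f₁ k).IsHomogeneous 0 := by
    by_cases hk : k = j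
    · subst hk
      simpa [f₁] using isHomogeneous_one _ _
    · simpa [f₁, hk] using isHomogeneous_zero _ _ _
  have hsum (c : ℂ) (s : Fin 3 → ℕ) (hs : ∑ k, e k * s k = 1) (z : Fin 3 → ℂ) (w : ℂ) :
      ∑ k, eval (Fin.snoc z w : Fin 4 → ℂ) (F k) * eval z (pderiv k (mon c s)) =
        κ * eval z (mon cP a) * eval z (mon c s) + w * eval z (pderiv j (mon c s)) := by
    have hX (k : Fin 3) : z k * eval z (pderiv k (mon c s)) = s k * eval z (mon c s) := by
      simpa using congrArg (eval z) (X_mul_pderiv_mon c s k)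
    have hsingle : ∑ k, eval z (f₁ k) * eval z (pderiv k (mon c s)) =
        eval z (pderiv j (mon c s)) := by
      rw [Finset.sum_eq_single j] <;> simp +contextual [f₁]
    simp only [F, map_add, map_mul, eval_snoc_liftZ, eval_snoc_X_last, add_mul,
      Finset.sum_add_distrib, mul_assoc w, ← Finset.mul_sum, hsingle]
    congr 1
    calc ∑ k, eval z (f₀ k) * eval z (pderiv k (mon c s))
        = ∑ k, κ * eval z (mon cP a) * eval z (mon c s) * (e k * s k) := by
          refine Finset.sum_congr rfl fun k _ => ?_
          simp only [f₀, map_mul, eval_C, eval_X]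
          linear_combination κ * e k * eval z (mon cP a) * hX k
      _ = _ := by rw [← Finset.mul_sum, hs, mul_one]
  have hderiv (c : ℂ) {s : Fin 3 → ℕ} (hs : s j = 0) : pderiv j (mon c s) = 0 := by
    rw [mon_eq_monomial, pderiv_monomial, expo_apply, hs]
    simp
  have hderivQ : pderiv j (mon cQ b) = C cQ := by
    have hexpo : expo (Pi.single j 1) - Finsupp.single j 1 = 0 := by
      ext i
      by_cases hi : i = j
      · subst hi
        simp
      · simp [hi]
    rw [mon_eq_monomial, pderiv_monomial, hb, hexpo]
    simp
  refine ⟨(F, G), (mem_gw_iff (by omega) 1).2 ⟨fun z u => ?_, fun k => ?_, ?_⟩, fun h0 => ?_⟩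
  · rw [sum_mul_PhiD, hsum _ _ hea, hsum _ _ heb, hsum _ _ heg, hderiv cP ha, hderiv cR hg,
      hderivQ]
    simp only [Phi, G, κ, map_mul, eval_snoc_liftZ, eval_snoc_X_last, eval_C, map_zero]
    generalize eval z (mon cP a) = p, eval z (mon cQ b) = q, eval z (mon cR g) = r
    refine ofReal_eq_zero.1 (mul_left_cancel₀ two_ne_zero ?_)
    rw [← ofReal_ofNat, ← ofReal_mul, ← add_conj]
    simp only [map_sub, map_add, map_mul, map_div₀, map_zero, conj_I, conj_ofReal, conj_conj,
      ofReal_ofNat, conj_ofNat]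
    field_simp
    ring
  · rw [one_mul]
    exact (isWeightedHomogeneous_liftZ (hf₀ k) _).add
      (isWeightedHomogeneous_X_last_mul_liftZ (hf₁ k) _)
  · convert isWeightedHomogeneous_X_last_mul_liftZ ((isHomogeneous_mon cP a).C_mul κ) _ using 1
    omega
  · have hFj := congrArg (eval (Fin.snoc 0 1 : Fin 4 → ℂ)) (congrFun (Prod.mk.inj h0).1 j)
    simp only [F, f₀, f₁, map_add, map_mul, eval_snoc_liftZ, eval_snoc_X_last] at hFj
    simp at hFj

theorem exists_mem_gw_one_of_exists_mem_gw_zero {cP cQ cR : ℂ} (hcP : cP ≠ 0) (hcQ : cQ ≠ 0)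
    (hcR : cR ≠ 0) {a b g : Fin 3 → ℕ} (hdeg : degE a + degE b = 2 * degE g)
    (hdegR : 2 ≤ degE g) (hdet : edet a b g ≠ 0) (hba : degE b ≤ degE a)
    (h : ∃ Xf ∈ gw (mon cP a) (mon cQ b) (mon cR g) (degE a + degE b)
      ((0 : ℕ) - 1 / (degE a + degE b : ℕ)), Xf ≠ 0) :
    ∃ Xf ∈ gw (mon cP a) (mon cQ b) (mon cR g) (degE a + degE b)
      ((1 : ℕ) - 1 / (degE a + degE b : ℕ)), Xf ≠ 0 := by
  obtain ⟨⟨F, G⟩, hX, hne⟩ := h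
  obtain ⟨hCR, hF, hG⟩ := (mem_gw_iff (by omega) 0).1 hX
  simp only [zero_mul, zero_add, one_mul] at hF hG
  choose f f' hf _ hf' hF using fun j => exists_eq_liftZ_add_X_mul_liftZ (by omega) (hF j)
  obtain ⟨p, p', hp, -, hp', rfl⟩ := exists_eq_liftZ_add_X_mul_liftZ (by omega) hG
  obtain rfl : F = fun j => liftZ (f j) := by
    funext j
    rw [hF, hf' j (by omega)]
    simp
  rw [hp' (by omega)] at hCR hne
  simp only [map_zero, mul_zero, add_zero] at hCR hne
  have hfc : f = fun j => C (coeff 0 (f j)) := by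
    funext j
    exact totalDegree_eq_zero_iff_eq_C.1 ((totalDegree_zero_iff_isHomogeneous _).2 (hf j))
  have ht := isInfCR_liftZ.1 hCR
  have hc : (fun j => coeff 0 (f j)) ≠ 0 := by
    intro h0
    have hf0 : f = 0 := by
      rw [hfc]
      funext j
      simp [show coeff 0 (f j) = 0 from congrFun h0 j]
    rw [hf0] at ht hne
    rw [ht.eq_zero (by omega) hp] at hne
    exact hne (by ext <;> simp)
  rw [hfc] at ht
  obtain ⟨j, hb, ha, hg⟩ := ht.exists_eq_single hcP hcQ hcR hdeg hdegR hdet hba hc hp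
  exact exists_mem_gw_of_eq_single hdet hb ha hg

theorem exists_mem_gw_zero_of_exists_mem_gw_one {cP cQ cR : ℂ} (hcP : cP ≠ 0) (hcQ : cQ ≠ 0)
    (hcR : cR ≠ 0) {a b g : Fin 3 → ℕ} (hdeg : degE a + degE b = 2 * degE g)
    (hdet : edet a b g ≠ 0)
    (h : ∃ Xf ∈ gw (mon cP a) (mon cQ b) (mon cR g) (degE a + degE b)
      ((1 : ℕ) - 1 / (degE a + degE b : ℕ)), Xf ≠ 0) :
    ∃ Xf ∈ gw (mon cP a) (mon cQ b) (mon cR g) (degE a + degE b)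
      ((0 : ℕ) - 1 / (degE a + degE b : ℕ)), Xf ≠ 0 := by
  have hd : 0 < degE a + degE b := Nat.add_pos_left (degE_pos_of_edet_ne_zero hdet).1 _
  obtain ⟨⟨F, G⟩, hX, hne⟩ := h
  obtain ⟨hCR, hF, hG⟩ := (mem_gw_iff hd 1).1 hX
  simp only [one_mul, one_add_one_eq_two] at hF hG
  choose f₀ f₁ hf₀ hf₁ _ hF using fun j => exists_eq_liftZ_add_X_mul_liftZ (by omega) (hF j)
  obtain ⟨p₀, p₁, hp₀, hp₁, -, rfl⟩ := exists_eq_liftZ_add_X_mul_liftZ (by omega) hG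
  obtain rfl : F = fun j => liftZ (f₀ j) + X (Fin.last 3) * liftZ (f₁ j) := funext hF
  by_cases h1 : f₁ ≠ 0 ∨ p₁ ≠ 0
  · refine exists_mem_gw_of_isTangent hd hCR.isTangent_of_affine (fun j => ?_) ?_ h1
    · simpa using hf₁ j
    · convert hp₁ using 1
      omega
  · push Not at h1
    obtain ⟨rfl, rfl⟩ := h1
    simp only [Pi.zero_apply, map_zero, mul_zero, add_zero] at hCR hne
    obtain ⟨rfl, rfl⟩ := (isInfCR_liftZ.1 hCR).eq_zero_of_isHomogeneous hcP hcQ hcR hdeg hdet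
      hf₀ hp₀
    exact absurd (by ext <;> simp) hne

/-- For a holomorphically nondegenerate monomial model with
`deg R ≥ 2` and `d = deg P + deg Q`, one has `dim_ℝ g_{-1/d} > 0 ↔ dim_ℝ g_{1-1/d} > 0`. -/
theorem stmt14 (cP cQ cR : ℂ) (hcP : cP ≠ 0) (hcQ : cQ ≠ 0) (hcR : cR ≠ 0)
    (a b g : Fin 3 → ℕ)
    (hdeg : degE a + degE b = 2 * degE g)
    (hdegR : 2 ≤ degE g)
    (hdet : edet a b g ≠ 0) :
    0 < Module.rank ℝ ↥(Submodule.span ℝ (gw (mon cP a) (mon cQ b) (mon cR g)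
        (degE a + degE b) (-(1 / ((degE a + degE b : ℕ) : ℚ))))) ↔
      0 < Module.rank ℝ ↥(Submodule.span ℝ (gw (mon cP a) (mon cQ b) (mon cR g)
        (degE a + degE b) (1 - 1 / ((degE a + degE b : ℕ) : ℚ)))) := by
  rw [rank_span_pos_iff, rank_span_pos_iff]
  have h0 : (-(1 / ((degE a + degE b : ℕ) : ℚ))) = (0 : ℕ) - 1 / ((degE a + degE b : ℕ) : ℚ) := by
    simp
  have h1 : (1 - 1 / ((degE a + degE b : ℕ) : ℚ)) = (1 : ℕ) - 1 / ((degE a + degE b : ℕ) : ℚ) := by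
    simp
  rw [h0, h1]
  refine ⟨fun h => ?_, exists_mem_gw_zero_of_exists_mem_gw_one hcP hcQ hcR hdeg hdet⟩
  rcases le_total (degE b) (degE a) with hba | hab
  · exact exists_mem_gw_one_of_exists_mem_gw_zero hcP hcQ hcR hdeg hdegR hdet hba h
  · rw [gw_comm, add_comm (degE a)] at h ⊢
    exact exists_mem_gw_one_of_exists_mem_gw_zero hcQ hcP hcR (by omega) hdegR
      (by rwa [edet_swap, neg_ne_zero]) hab h
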